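/- Let (Γ, μ) be a finite measure space and let j : Γ × ℝ^d → ℝ satisfy: (H1) for every ξ ∈ ℝ^d the map x ↦ j(x, ξ) is measurable and j(·, 0) ∈ L¹(Γ, μ); (H2) for μ-a.e. x ∈ Γ the map ξ ↦ j(x, ξ) is locally Lipschitz on ℝ^d; (H3) there exist k₀, k₁ ≥ 0 such that for μ-a.e. x and all ξ ∈ ℝ^d, every η ∈ ∂j(x, ξ) satisfies |η| ≤ k₀ + k₁|ξ|. Define J(v) := ∫_Γ j(x, v(x)) dμ(x) for v ∈ L²(Γ, μ; ℝ^d), and assume for every u, v ∈ L²(Γ, μ; ℝ^d) the map x ↦ j⁰(x, u(x); v(x)) is measurable. Then every z ∈ L²(Γ, μ; ℝ^d) belonging to the Clarke subdifferential ∂J(v) (i.e., satisfying (z, w)_{L²} ≤ J⁰(v; w) for all w ∈ L²(Γ, μ; ℝ^d)) obeys the bound ‖z‖_{L²} ≤ k₀ μ(Γ)^{1/2} + k₁ ‖v‖_{L²}. -/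

import Mathlib

open Filter Topology MeasureTheory
open scoped RealInnerProductSpace

/-- The Clarke generalized directional derivative of `f` at `x` in the direction `v`:
`f⁰(x; v) = limsup_{y → x, λ ↓ 0} (f (y + λ v) - f y) / λ`. -/
noncomputable def clarkeDeriv {X : Type*} [NormedAddCommGroup X] [NormedSpace ℝ X]
    (f : X → ℝ) (x v : X) : ℝ :=
  Filter.limsup (fun p : X × ℝ => (f (p.1 + p.2 • v) - f p.1) / p.2)
    ((𝓝 x) ×ˢ (𝓝[>] (0 : ℝ)))

/-- The Clarke subdifferential of `f` at `x`, identified with a subset of the space itself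
via the inner product: `∂f(x) = {η : ⟪η, v⟫ ≤ f⁰(x; v) for all v}`. -/
def clarkeSubdiffInner {X : Type*} [NormedAddCommGroup X] [InnerProductSpace ℝ X]
    (f : X → ℝ) (x : X) : Set X :=
  {η | ∀ v : X, ⟪η, v⟫ ≤ clarkeDeriv f x v}

/-!
Condition (H3) implies that almost every `j x` is Lipschitz with a constant growing linearly:
`|j x (a + h) - j x a| ≤ (k₀ + k₁ (‖a‖ + ‖h‖)) ‖h‖`. Indeed, by Hahn–Banach the Clarke derivative is
the support function of the Clarke subdifferential, and a mean value inequality integrates a bound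
on it along segments. By Cauchy–Schwarz in `L²` this property passes from the integrands to the
integral functional, with `k₀` replaced by `k₀ μ(Γ)^{1/2}`. It bounds the difference quotients of
the functional near `v`, and testing `z ∈ ∂J(v)` against `w = z` gives the claim.
-/

open TopologicalSpace (PseudoMetrizableSpace)
open scoped NNReal Pointwise

section ClarkeDerivative

/-- The filter `y → x, λ ↓ 0` along which Clarke derivatives at `x` are computed. -/
abbrev clarkeFilter {X : Type*} [TopologicalSpace X] (x : X) : Filter (X × ℝ) :=
  𝓝 x ×ˢ 𝓝[>] (0 : ℝ)

lemma eventually_snd_pos_clarkeFilter {X : Type*} [TopologicalSpace X] (x : X) :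
    ∀ᶠ p in clarkeFilter x, 0 < p.2 :=
  tendsto_snd.eventually self_mem_nhdsWithin

lemma tendsto_mul_snd_clarkeFilter {X : Type*} [TopologicalSpace X] (x : X) {t : ℝ}
    (ht : 0 < t) :
    Tendsto (fun p : X × ℝ => (p.1, t * p.2)) (clarkeFilter x) (clarkeFilter x) := by
  have hscale : Tendsto (fun s : ℝ => t * s) (𝓝[>] 0) (𝓝[>] 0) := by
    have hmaps : Set.MapsTo (fun s : ℝ => t * s) (Set.Ioi 0) (Set.Ioi 0) := fun s hs =>
      mul_pos ht hs
    simpa only [mul_zero] using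
      ((continuous_const_mul t).continuousWithinAt (x := 0)).tendsto_nhdsWithin hmaps
  exact tendsto_fst.prodMk (hscale.comp tendsto_snd)

variable {X : Type*} [NormedAddCommGroup X] [NormedSpace ℝ X]

/-- The difference quotient `(f (y + λ v) - f y) / λ`, as a function of the pair `(y, λ)`; its
limsup along `clarkeFilter x` is the Clarke derivative `f⁰(x; v)`. -/
noncomputable def diffQuotient (f : X → ℝ) (v : X) (p : X × ℝ) : ℝ :=
  (f (p.1 + p.2 • v) - f p.1) / p.2

variable {f : X → ℝ} {x : X}

lemma clarkeDeriv_eq_limsup_diffQuotient (f : X → ℝ) (x v : X) :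
    clarkeDeriv f x v = limsup (diffQuotient f v) (clarkeFilter x) :=
  rfl

lemma tendsto_add_smul_clarkeFilter (x v : X) :
    Tendsto (fun p : X × ℝ => p.1 + p.2 • v) (clarkeFilter x) (𝓝 x) := by
  have hsnd : Tendsto Prod.snd (clarkeFilter x) (𝓝 0) :=
    tendsto_snd.mono_right nhdsWithin_le_nhds
  simpa only [zero_smul, add_zero] using tendsto_fst.add (hsnd.smul_const v)

lemma diffQuotient_add (f : X → ℝ) (u v : X) (p : X × ℝ) :
    diffQuotient f (u + v) p =
      diffQuotient f u p + diffQuotient f v (p.1 + p.2 • u, p.2) := by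
  simp only [diffQuotient, smul_add, ← add_assoc]
  ring

lemma diffQuotient_smul (f : X → ℝ) (v : X) {t : ℝ} (ht : t ≠ 0) (p : X × ℝ) :
    diffQuotient f (t • v) p = t * diffQuotient f v (p.1, t * p.2) := by
  simp only [diffQuotient, smul_smul, mul_comm t p.2]
  field_simp

lemma clarkeDeriv_smul (f : X → ℝ) (x v : X) {t : ℝ} (ht : 0 < t) :
    clarkeDeriv f x (t • v) = t * clarkeDeriv f x v := by
  -- Positive scaling commutes with `sInf` even where `sInf` has its junk value `0`.
  have hbounds : {c | ∀ᶠ p in clarkeFilter x, diffQuotient f (t • v) p ≤ c} =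
      t • {c | ∀ᶠ p in clarkeFilter x, diffQuotient f v p ≤ c} := by
    ext c
    rw [Set.mem_smul_set_iff_inv_smul_mem₀ ht.ne', smul_eq_mul]
    refine ⟨fun h => ?_, fun h => ?_⟩
    · filter_upwards [(tendsto_mul_snd_clarkeFilter x (inv_pos.2 ht)).eventually h] with p hp
      rwa [diffQuotient_smul f v ht.ne', mul_inv_cancel_left₀ ht.ne', ← le_inv_mul_iff₀ ht] at hp
    · filter_upwards [(tendsto_mul_snd_clarkeFilter x ht).eventually h] with p hp
      rwa [diffQuotient_smul f v ht.ne', ← le_inv_mul_iff₀ ht]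
  rw [clarkeDeriv_eq_limsup_diffQuotient, clarkeDeriv_eq_limsup_diffQuotient, limsup_eq, limsup_eq,
    hbounds, Real.sInf_smul_of_nonneg ht.le, smul_eq_mul]

lemma clarkeDeriv_le_of_abs_diffQuotient_le {v : X} {g : X × ℝ → ℝ} {c : ℝ}
    (hle : ∀ᶠ p in clarkeFilter x, |diffQuotient f v p| ≤ g p)
    (hg : Tendsto g (clarkeFilter x) (𝓝 c)) : clarkeDeriv f x v ≤ c := by
  have hbdd : IsBoundedUnder (· ≥ ·) (clarkeFilter x) (diffQuotient f v) :=
    hg.neg.isBoundedUnder_ge.mono_ge (hle.mono fun p hp => neg_le_of_abs_le hp)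
  rw [← hg.limsup_eq]
  exact limsup_le_limsup (hle.mono fun p hp => le_of_abs_le hp) hbdd.isCoboundedUnder_le
    hg.isBoundedUnder_le

section LipschitzNear

variable {K : ℝ≥0} {s : Set X}

lemma eventually_abs_diffQuotient_le (hs : s ∈ 𝓝 x) (hf : LipschitzOnWith K f s) (v : X) :
    ∀ᶠ p in clarkeFilter x, |diffQuotient f v p| ≤ K * ‖v‖ := by
  filter_upwards [tendsto_fst.eventually hs, (tendsto_add_smul_clarkeFilter x v).eventually hs,
    eventually_snd_pos_clarkeFilter x] with p hp hpv hpos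
  have hlip := hf.dist_le_mul _ hpv _ hp
  rw [Real.dist_eq, dist_eq_norm, add_sub_cancel_left, norm_smul,
    Real.norm_of_nonneg hpos.le] at hlip
  rw [diffQuotient, abs_div, abs_of_pos hpos, div_le_iff₀ hpos]
  linarith

lemma clarkeDeriv_le_mul_norm (hs : s ∈ 𝓝 x) (hf : LipschitzOnWith K f s) (v : X) :
    clarkeDeriv f x v ≤ K * ‖v‖ :=
  clarkeDeriv_le_of_abs_diffQuotient_le (eventually_abs_diffQuotient_le hs hf v) tendsto_const_nhds

lemma eventually_diffQuotient_lt (hs : s ∈ 𝓝 x) (hf : LipschitzOnWith K f s) {v : X} {c : ℝ}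
    (hc : clarkeDeriv f x v < c) : ∀ᶠ p in clarkeFilter x, diffQuotient f v p < c :=
  eventually_lt_of_limsup_lt hc <| isBoundedUnder_of_eventually_le <|
    (eventually_abs_diffQuotient_le hs hf v).mono fun _ hp => le_of_abs_le hp

lemma clarkeDeriv_add_le (hs : s ∈ 𝓝 x) (hf : LipschitzOnWith K f s) (u v : X) :
    clarkeDeriv f x (u + v) ≤ clarkeDeriv f x u + clarkeDeriv f x v := by
  refine le_of_forall_pos_le_add fun ε hε => ?_
  have hlt (w : X) :
      ∀ᶠ p in clarkeFilter x, diffQuotient f w p < clarkeDeriv f x w + ε / 2 :=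
    eventually_diffQuotient_lt hs hf (lt_add_of_pos_right _ (half_pos hε))
  have hshift : Tendsto (fun p : X × ℝ => (p.1 + p.2 • u, p.2)) (clarkeFilter x) (clarkeFilter x) :=
    (tendsto_add_smul_clarkeFilter x u).prodMk tendsto_snd
  have hbdd : IsBoundedUnder (· ≥ ·) (clarkeFilter x) (diffQuotient f (u + v)) :=
    isBoundedUnder_of_eventually_ge <|
      (eventually_abs_diffQuotient_le hs hf (u + v)).mono fun _ hp => neg_le_of_abs_le hp
  refine limsup_le_of_le hbdd.isCoboundedUnder_le ?_
  filter_upwards [hlt u, hshift.eventually (hlt v)] with p hpu hpv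
  rw [← diffQuotient, diffQuotient_add]
  linarith

end LipschitzNear

end ClarkeDerivative

section MeanValue

variable {X : Type*} [NormedAddCommGroup X] [NormedSpace ℝ X] {f : X → ℝ}

lemma eventually_slope_lt_of_clarkeDeriv_lt (hf : LocallyLipschitz f) {a v : X} {t r : ℝ}
    (h : clarkeDeriv f (a + t • v) v < r) :
    ∀ᶠ s in 𝓝[>] t, slope (fun s : ℝ => f (a + s • v)) t s < r := by
  have hsub : Tendsto (fun s : ℝ => s - t) (𝓝[>] t) (𝓝[>] 0) := by
    have hmaps : Set.MapsTo (fun s : ℝ => s - t) (Set.Ioi t) (Set.Ioi 0) := fun s hs =>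
      sub_pos.2 (Set.mem_Ioi.1 hs)
    simpa only [sub_self] using
      ((continuous_sub_right t).continuousWithinAt (x := t)).tendsto_nhdsWithin hmaps
  have hbase : Tendsto (fun s : ℝ => (a + t • v, s - t)) (𝓝[>] t) (clarkeFilter (a + t • v)) :=
    tendsto_const_nhds.prodMk hsub
  obtain ⟨K, s, hs, hK⟩ := hf (a + t • v)
  filter_upwards [hbase.eventually (eventually_diffQuotient_lt hs hK h)] with s hs
  rwa [diffQuotient, add_assoc, ← add_smul, add_sub_cancel,
    ← slope_def_field (fun s => f (a + s • v))] at hs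

lemma sub_le_of_clarkeDeriv_le_on_segment (hf : LocallyLipschitz f) {a b : X} {C : ℝ}
    (hC : ∀ y ∈ segment ℝ a b, clarkeDeriv f y (b - a) ≤ C) : f b - f a ≤ C := by
  have hline : ∀ ⦃t : ℝ⦄, t ∈ Set.Icc 0 1 → f (a + t • (b - a)) ≤ f a + t * C := by
    refine image_le_of_liminf_slope_right_le_deriv_boundary (B' := fun _ => C)
      (hf.continuous.comp (by fun_prop)).continuousOn (by simp) (by fun_prop) (fun t _ => ?_)
      (fun t ht r hr => ?_)
    · simpa only [id, one_mul] using
        (((hasDerivAt_id t).mul_const C).const_add (f a)).hasDerivWithinAt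
    · have hmem : a + t • (b - a) ∈ segment ℝ a b :=
        segment_eq_image' ℝ a b ▸ Set.mem_image_of_mem _ (Set.Ico_subset_Icc_self ht)
      exact (eventually_slope_lt_of_clarkeDeriv_lt hf ((hC _ hmem).trans_lt hr)).frequently
  have hend := hline (Set.right_mem_Icc.2 zero_le_one)
  rw [one_smul, one_mul, add_sub_cancel] at hend
  linarith

end MeanValue

section MaxFormula

lemma exists_linearMap_eq_and_le_of_sublinear {E : Type*} [AddCommGroup E] [Module ℝ E]
    {N : E → ℝ} (N_hom : ∀ c : ℝ, 0 < c → ∀ x, N (c • x) = c * N x)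
    (N_add : ∀ x y, N (x + y) ≤ N x + N y) (w : E) :
    ∃ g : E →ₗ[ℝ] ℝ, g w = N w ∧ ∀ x, g x ≤ N x := by
  have N_zero : N 0 = 0 := by
    have h := N_hom 2 two_pos 0
    rw [smul_zero] at h
    linarith
  have mul_le (c : ℝ) : c * N w ≤ N (c • w) := by
    rcases lt_trichotomy c 0 with hc | rfl | hc
    · have h := N_add (c • w) (-c • w)
      rw [← add_smul, add_neg_cancel, zero_smul, N_zero, N_hom (-c) (neg_pos.2 hc)] at h
      linarith
    · rw [zero_mul, zero_smul, N_zero]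
    · exact (N_hom c hc w).ge
  have h_smul_eq_zero (c : ℝ) (hc : c • w = 0) : c • N w = 0 := by
    rcases smul_eq_zero.1 hc with rfl | rfl
    · exact zero_smul ℝ _
    · rw [N_zero, smul_zero]
  let onSpan : E →ₗ.[ℝ] ℝ := LinearPMap.mkSpanSingleton' w (N w) h_smul_eq_zero
  have onSpan_le (y : onSpan.domain) : onSpan y ≤ N y := by
    obtain ⟨y, hy⟩ := y
    obtain ⟨c, rfl⟩ := Submodule.mem_span_singleton.1 hy
    exact (LinearPMap.mkSpanSingleton'_apply _ _ _ c hy).trans_le (mul_le c)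
  obtain ⟨g, hg_ext, hg_le⟩ := exists_extension_of_le_sublinear onSpan N N_hom N_add onSpan_le
  refine ⟨g, ?_, hg_le⟩
  exact (hg_ext ⟨w, Submodule.mem_span_singleton_self w⟩).trans
    (LinearPMap.mkSpanSingleton'_apply_self _ _ _ _)

variable {E : Type*} [NormedAddCommGroup E] [InnerProductSpace ℝ E] [CompleteSpace E]
  {f : E → ℝ} {x : E} {K : ℝ≥0} {s : Set E}

lemma exists_mem_clarkeSubdiffInner_inner_eq (hs : s ∈ 𝓝 x) (hf : LipschitzOnWith K f s) (w : E) :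
    ∃ η ∈ clarkeSubdiffInner f x, ⟪η, w⟫ = clarkeDeriv f x w := by
  obtain ⟨g, hgw, hg_le⟩ := exists_linearMap_eq_and_le_of_sublinear
    (fun c hc y => clarkeDeriv_smul f x y hc) (clarkeDeriv_add_le hs hf) w
  have hg_bound (y : E) : ‖g y‖ ≤ K * ‖y‖ := by
    have hneg := (hg_le (-y)).trans (clarkeDeriv_le_mul_norm hs hf (-y))
    rw [map_neg, norm_neg] at hneg
    exact abs_le.2 ⟨by linarith, (hg_le y).trans (clarkeDeriv_le_mul_norm hs hf y)⟩
  refine ⟨(InnerProductSpace.toDual ℝ E).symm (g.mkContinuous K hg_bound), fun y => ?_, ?_⟩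
  · simpa only [InnerProductSpace.toDual_symm_apply, LinearMap.mkContinuous_apply] using hg_le y
  · simpa only [InnerProductSpace.toDual_symm_apply, LinearMap.mkContinuous_apply] using hgw

lemma clarkeDeriv_le_of_clarkeSubdiffInner_norm_le (hs : s ∈ 𝓝 x) (hf : LipschitzOnWith K f s)
    {M : ℝ} (hM : ∀ η ∈ clarkeSubdiffInner f x, ‖η‖ ≤ M) (w : E) :
    clarkeDeriv f x w ≤ M * ‖w‖ := by
  obtain ⟨η, hη, hηw⟩ := exists_mem_clarkeSubdiffInner_inner_eq hs hf w
  calc clarkeDeriv f x w = ⟪η, w⟫ := hηw.symm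
    _ ≤ ‖η‖ * ‖w‖ := real_inner_le_norm η w
    _ ≤ M * ‖w‖ := by gcongr; exact hM η hη

lemma sub_le_of_clarkeSubdiffInner_norm_le_on_convex {s : Set E} (hs : Convex ℝ s)
    (hf : LocallyLipschitz f) {M : ℝ} (hM : ∀ y ∈ s, ∀ η ∈ clarkeSubdiffInner f y, ‖η‖ ≤ M)
    {a b : E} (ha : a ∈ s) (hb : b ∈ s) : f b - f a ≤ M * ‖b - a‖ := by
  refine sub_le_of_clarkeDeriv_le_on_segment hf fun y hy => ?_
  obtain ⟨K, t, ht, hK⟩ := hf y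
  exact clarkeDeriv_le_of_clarkeSubdiffInner_norm_le ht hK (hM y (hs.segment_subset ha hb hy)) _

end MaxFormula

section LinearGrowth

/-- `f` is Lipschitz with a constant that grows at most linearly, with offset `k₀` and slope `k₁`.
The constant is evaluated at `‖a‖ + ‖h‖`, which bounds the norm on the segment from `a` to `a + h`;
unlike `max ‖a‖ ‖a + h‖`, this expression is preserved by Minkowski's inequality in `L²`. -/
def LipschitzWithLinearGrowth {X : Type*} [NormedAddCommGroup X] (k₀ k₁ : ℝ) (f : X → ℝ) : Prop :=
  ∀ a h : X, |f (a + h) - f a| ≤ (k₀ + k₁ * (‖a‖ + ‖h‖)) * ‖h‖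

variable {k₀ k₁ : ℝ}

theorem lipschitzWithLinearGrowth_of_clarkeSubdiffInner {E : Type*} [NormedAddCommGroup E]
    [InnerProductSpace ℝ E] [CompleteSpace E] {f : E → ℝ} (hf : LocallyLipschitz f) (hk₁ : 0 ≤ k₁)
    (hgrowth : ∀ y, ∀ η ∈ clarkeSubdiffInner f y, ‖η‖ ≤ k₀ + k₁ * ‖y‖) :
    LipschitzWithLinearGrowth k₀ k₁ f := by
  intro a h
  have hM : ∀ y ∈ Metric.closedBall (0 : E) (‖a‖ + ‖h‖), ∀ η ∈ clarkeSubdiffInner f y,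
      ‖η‖ ≤ k₀ + k₁ * (‖a‖ + ‖h‖) := fun y hy η hη =>
    (hgrowth y η hη).trans (by gcongr; exact mem_closedBall_zero_iff.1 hy)
  have ha : a ∈ Metric.closedBall (0 : E) (‖a‖ + ‖h‖) := by simp
  have hah : a + h ∈ Metric.closedBall (0 : E) (‖a‖ + ‖h‖) :=
    mem_closedBall_zero_iff.2 (norm_add_le a h)
  have hball := convex_closedBall (0 : E) (‖a‖ + ‖h‖)
  have hforward := sub_le_of_clarkeSubdiffInner_norm_le_on_convex hball hf hM ha hah
  have hbackward := sub_le_of_clarkeSubdiffInner_norm_le_on_convex hball hf hM hah ha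
  rw [add_sub_cancel_left] at hforward
  rw [sub_add_cancel_left, norm_neg] at hbackward
  exact abs_sub_le_iff.2 ⟨hforward, hbackward⟩

namespace LipschitzWithLinearGrowth

protected lemma continuous {X : Type*} [NormedAddCommGroup X] {f : X → ℝ}
    (hf : LipschitzWithLinearGrowth k₀ k₁ f) : Continuous f := by
  refine continuous_iff_continuousAt.2 fun a => tendsto_iff_norm_sub_tendsto_zero.2 ?_
  have hle (b : X) : ‖f b - f a‖ ≤ (k₀ + k₁ * (‖a‖ + ‖b - a‖)) * ‖b - a‖ := by
    simpa only [add_sub_cancel, Real.norm_eq_abs] using hf a (b - a)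
  have hbound : Continuous fun b : X => (k₀ + k₁ * (‖a‖ + ‖b - a‖)) * ‖b - a‖ := by fun_prop
  refine squeeze_zero (fun _ => norm_nonneg _) hle ?_
  simpa only [sub_self, norm_zero, mul_zero] using hbound.tendsto a

lemma clarkeDeriv_le {X : Type*} [NormedAddCommGroup X] [NormedSpace ℝ X] {f : X → ℝ}
    (hf : LipschitzWithLinearGrowth k₀ k₁ f) (x v : X) :
    clarkeDeriv f x v ≤ (k₀ + k₁ * ‖x‖) * ‖v‖ := by
  have hle : ∀ᶠ p in clarkeFilter x,
      |diffQuotient f v p| ≤ (k₀ + k₁ * (‖p.1‖ + p.2 * ‖v‖)) * ‖v‖ := by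
    filter_upwards [eventually_snd_pos_clarkeFilter x] with p hp
    have hinc := hf p.1 (p.2 • v)
    rw [norm_smul, Real.norm_of_nonneg hp.le] at hinc
    rw [diffQuotient, abs_div, abs_of_pos hp, div_le_iff₀ hp]
    linarith
  have hlim : Tendsto (fun p : X × ℝ => (k₀ + k₁ * (‖p.1‖ + p.2 * ‖v‖)) * ‖v‖) (clarkeFilter x)
      (𝓝 ((k₀ + k₁ * ‖x‖) * ‖v‖)) := by
    have hcont : Continuous fun p : X × ℝ => (k₀ + k₁ * (‖p.1‖ + p.2 * ‖v‖)) * ‖v‖ := by fun_prop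
    have hfilter : clarkeFilter x ≤ 𝓝 (x, 0) :=
      (prod_mono le_rfl nhdsWithin_le_nhds).trans nhds_prod_eq.ge
    simpa only [zero_mul, add_zero] using (hcont.tendsto (x, 0)).mono_left hfilter
  exact clarkeDeriv_le_of_abs_diffQuotient_le hle hlim

theorem norm_le_of_mem_clarkeSubdiffInner {E : Type*} [NormedAddCommGroup E]
    [InnerProductSpace ℝ E] {f : E → ℝ} (hf : LipschitzWithLinearGrowth k₀ k₁ f) (hk₀ : 0 ≤ k₀)
    (hk₁ : 0 ≤ k₁) {x z : E} (hz : z ∈ clarkeSubdiffInner f x) : ‖z‖ ≤ k₀ + k₁ * ‖x‖ := by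
  have htest : ‖z‖ * ‖z‖ ≤ (k₀ + k₁ * ‖x‖) * ‖z‖ :=
    (real_inner_self_eq_norm_mul_norm z).symm.trans_le ((hz z).trans (hf.clarkeDeriv_le x z))
  rcases (norm_nonneg z).eq_or_lt with hz0 | hz0
  · rw [← hz0]
    positivity
  · exact le_of_mul_le_mul_right htest hz0

end LipschitzWithLinearGrowth

end LinearGrowth

section IntegralFunctional

variable {Γ : Type*} [MeasurableSpace Γ] {μ : Measure Γ}

section Superposition

variable {E F : Type*} [TopologicalSpace F] [AddCommMonoid F] [ContinuousAdd F] {j : Γ → E → F}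

lemma aestronglyMeasurable_comp_simpleFunc
    (hj : ∀ ξ, AEStronglyMeasurable (fun x => j x ξ) μ) (φ : SimpleFunc Γ E) :
    AEStronglyMeasurable (fun x => j x (φ x)) μ := by
  have hsum : (fun x => j x (φ x)) =
      ∑ ξ ∈ φ.range, (φ ⁻¹' {ξ}).indicator fun x => j x ξ := by
    classical
    ext x
    simp [Finset.sum_apply, Set.indicator_apply]
  rw [hsum]
  exact Finset.aestronglyMeasurable_sum _ fun ξ _ => (hj ξ).indicator (φ.measurableSet_fiber ξ)

lemma aestronglyMeasurable_comp_of_caratheodory [TopologicalSpace E] [PseudoMetrizableSpace F]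
    (hj : ∀ ξ, AEStronglyMeasurable (fun x => j x ξ) μ) (hcont : ∀ᵐ x ∂μ, Continuous (j x))
    {y : Γ → E} (hy : AEStronglyMeasurable y μ) : AEStronglyMeasurable (fun x => j x (y x)) μ := by
  obtain ⟨y', hy', hyy'⟩ := hy
  refine aestronglyMeasurable_of_tendsto_ae atTop
    (fun n => aestronglyMeasurable_comp_simpleFunc hj (hy'.approx n)) ?_
  filter_upwards [hcont, hyy'] with x hx hxy
  rw [hxy]
  exact (hx.tendsto (y' x)).comp (hy'.tendsto_approx x)

end Superposition

lemma integral_mul_le_lpNorm_mul_lpNorm {f g : Γ → ℝ} (hf : MemLp f 2 μ) (hg : MemLp g 2 μ) :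
    ∫ x, f x * g x ∂μ ≤ lpNorm f 2 μ * lpNorm g 2 μ := by
  have hinner : ⟪hf.toLp f, hg.toLp g⟫ = ∫ x, f x * g x ∂μ := by
    rw [L2.inner_def]
    refine integral_congr_ae ?_
    filter_upwards [hf.coeFn_toLp, hg.coeFn_toLp] with x hfx hgx
    rw [hfx, hgx, real_inner_comm]
    rfl
  have hcs := real_inner_le_norm (hf.toLp f) (hg.toLp g)
  rwa [hinner, Lp.norm_toLp, Lp.norm_toLp, toReal_eLpNorm hf.1, toReal_eLpNorm hg.1] at hcs

variable [IsFiniteMeasure μ] {E : Type*} [NormedAddCommGroup E] {k₀ k₁ : ℝ}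

lemma memLp_affine_norm_add_norm {y h : Γ → E} (hy : MemLp y 2 μ) (hh : MemLp h 2 μ) (k₀ k₁ : ℝ) :
    MemLp (fun x => k₀ + k₁ * (‖y x‖ + ‖h x‖)) 2 μ :=
  (memLp_const k₀).add ((hy.norm.add hh.norm).const_mul k₁)

lemma lpNorm_affine_norm_add_norm_le {y h : Γ → E} (hy : MemLp y 2 μ) (hh : MemLp h 2 μ)
    (hk₀ : 0 ≤ k₀) (hk₁ : 0 ≤ k₁) :
    lpNorm (fun x => k₀ + k₁ * (‖y x‖ + ‖h x‖)) 2 μ ≤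
      k₀ * √(μ.real Set.univ) + k₁ * (lpNorm y 2 μ + lpNorm h 2 μ) :=
  calc lpNorm (fun x => k₀ + k₁ * (‖y x‖ + ‖h x‖)) 2 μ
      ≤ lpNorm (fun _ : Γ => k₀) 2 μ + lpNorm (k₁ • fun x => ‖y x‖ + ‖h x‖) 2 μ :=
        lpNorm_add_le (memLp_const k₀) one_le_two
    _ = k₀ * √(μ.real Set.univ) + k₁ * lpNorm (fun x => ‖y x‖ + ‖h x‖) 2 μ := by
        rw [lpNorm_const' two_ne_zero ENNReal.ofNat_ne_top, lpNorm_const_smul,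
          coe_nnnorm, Real.norm_of_nonneg hk₀, Real.norm_of_nonneg hk₁, Real.sqrt_eq_rpow,
          ENNReal.toReal_ofNat, one_div]
    _ ≤ k₀ * √(μ.real Set.univ) + k₁ * (lpNorm y 2 μ + lpNorm h 2 μ) := by
        rw [← lpNorm_norm hy.1, ← lpNorm_norm hh.1]
        gcongr
        exact lpNorm_add_le hy.norm one_le_two

variable {j : Γ → E → ℝ}

lemma integrable_comp_of_lipschitzWithLinearGrowth
    (hmeas : ∀ ξ, AEStronglyMeasurable (fun x => j x ξ) μ) (hint0 : Integrable (fun x => j x 0) μ)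
    (hj : ∀ᵐ x ∂μ, LipschitzWithLinearGrowth k₀ k₁ (j x)) {y : Γ → E} (hy : MemLp y 2 μ) :
    Integrable (fun x => j x (y x)) μ := by
  have hweight := memLp_affine_norm_add_norm (MemLp.zero' : MemLp (fun _ => (0 : E)) 2 μ) hy k₀ k₁
  have hmeas_y := aestronglyMeasurable_comp_of_caratheodory hmeas
    (hj.mono fun x hx => hx.continuous) hy.1
  have hdiff : Integrable (fun x => j x (y x) - j x 0) μ := by
    refine (hweight.integrable_mul hy.norm).mono' (hmeas_y.sub hint0.1) ?_
    filter_upwards [hj] with x hx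
    simpa only [zero_add, Real.norm_eq_abs, Pi.mul_apply] using hx 0 (y x)
  simpa only [Pi.add_def, sub_add_cancel] using hdiff.add hint0

theorem lipschitzWithLinearGrowth_integral
    (hmeas : ∀ ξ, AEStronglyMeasurable (fun x => j x ξ) μ) (hint0 : Integrable (fun x => j x 0) μ)
    (hk₀ : 0 ≤ k₀) (hk₁ : 0 ≤ k₁) (hj : ∀ᵐ x ∂μ, LipschitzWithLinearGrowth k₀ k₁ (j x)) :
    LipschitzWithLinearGrowth (k₀ * √(μ.real Set.univ)) k₁
      (fun y : Lp E 2 μ => ∫ x, j x (y x) ∂μ) := by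
  intro y h
  have hint (u : Lp E 2 μ) : Integrable (fun x => j x (u x)) μ :=
    integrable_comp_of_lipschitzWithLinearGrowth hmeas hint0 hj (Lp.memLp u)
  have hweight := memLp_affine_norm_add_norm (Lp.memLp y) (Lp.memLp h) k₀ k₁
  have hnorm (u : Lp E 2 μ) : lpNorm u 2 μ = ‖u‖ := by
    rw [Lp.norm_def, toReal_eLpNorm (Lp.aestronglyMeasurable u)]
  have hpointwise : ∀ᵐ x ∂μ, ‖j x ((y + h : Lp E 2 μ) x) - j x (y x)‖ ≤
      (k₀ + k₁ * (‖y x‖ + ‖h x‖)) * ‖h x‖ := by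
    filter_upwards [hj, Lp.coeFn_add y h] with x hx hadd
    rw [hadd]
    exact hx (y x) (h x)
  calc |∫ x, j x ((y + h : Lp E 2 μ) x) ∂μ - ∫ x, j x (y x) ∂μ|
      = ‖∫ x, (j x ((y + h : Lp E 2 μ) x) - j x (y x)) ∂μ‖ := by
        rw [integral_sub (hint _) (hint _), Real.norm_eq_abs]
    _ ≤ ∫ x, (k₀ + k₁ * (‖y x‖ + ‖h x‖)) * ‖h x‖ ∂μ :=
        norm_integral_le_of_norm_le (hweight.integrable_mul (Lp.memLp h).norm) hpointwise
    _ ≤ lpNorm (fun x => k₀ + k₁ * (‖y x‖ + ‖h x‖)) 2 μ * lpNorm (fun x => ‖h x‖) 2 μ :=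
        integral_mul_le_lpNorm_mul_lpNorm hweight (Lp.memLp h).norm
    _ ≤ (k₀ * √(μ.real Set.univ) + k₁ * (lpNorm y 2 μ + lpNorm h 2 μ)) * lpNorm h 2 μ := by
        rw [lpNorm_norm (Lp.aestronglyMeasurable h)]
        gcongr
        · exact lpNorm_nonneg
        · exact lpNorm_affine_norm_add_norm_le (Lp.memLp y) (Lp.memLp h) hk₀ hk₁
    _ = (k₀ * √(μ.real Set.univ) + k₁ * (‖y‖ + ‖h‖)) * ‖h‖ := by rw [hnorm y, hnorm h]

end IntegralFunctional

theorem clarkeSubdiff_integral_functional_bound_general {Γ E : Type*} [MeasurableSpace Γ]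
    {μ : Measure Γ} [IsFiniteMeasure μ] [NormedAddCommGroup E] [InnerProductSpace ℝ E]
    [CompleteSpace E] {j : Γ → E → ℝ} (hmeas : ∀ ξ, AEStronglyMeasurable (fun x => j x ξ) μ)
    (hint0 : Integrable (fun x => j x 0) μ) (hlip : ∀ᵐ x ∂μ, LocallyLipschitz (j x))
    {k₀ k₁ : ℝ} (hk₀ : 0 ≤ k₀) (hk₁ : 0 ≤ k₁)
    (hgrowth : ∀ᵐ x ∂μ, ∀ ξ, ∀ η ∈ clarkeSubdiffInner (j x) ξ, ‖η‖ ≤ k₀ + k₁ * ‖ξ‖)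
    {v z : Lp E 2 μ}
    (hz : z ∈ clarkeSubdiffInner (fun w : Lp E 2 μ => ∫ x, j x (w x) ∂μ) v) :
    ‖z‖ ≤ k₀ * √(μ.real Set.univ) + k₁ * ‖v‖ := by
  have hj : ∀ᵐ x ∂μ, LipschitzWithLinearGrowth k₀ k₁ (j x) := by
    filter_upwards [hlip, hgrowth] with x hlip_x hgrowth_x
    exact lipschitzWithLinearGrowth_of_clarkeSubdiffInner hlip_x hk₁ hgrowth_x
  have hJ := lipschitzWithLinearGrowth_integral hmeas hint0 hk₀ hk₁ hj
  exact hJ.norm_le_of_mem_clarkeSubdiffInner (by positivity) hk₁ hz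

/-- Under (H1)–(H3), every element `z` of the Clarke subdifferential of the integral
functional `J(v) = ∫ j(x, v(x)) dμ` at `v ∈ L²(Γ, μ; ℝ^d)` satisfies
`‖z‖_{L²} ≤ k₀ μ(Γ)^{1/2} + k₁ ‖v‖_{L²}`. -/
theorem clarkeSubdiff_integral_functional_bound {d : ℕ}
    {Γ : Type*} [MeasurableSpace Γ] (μ : Measure Γ) [IsFiniteMeasure μ]
    (j : Γ → EuclideanSpace ℝ (Fin d) → ℝ)
    (hmeas : ∀ ξ : EuclideanSpace ℝ (Fin d), Measurable (fun x => j x ξ))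
    (hint0 : Integrable (fun x => j x 0) μ)
    (hlip : ∀ᵐ x ∂μ, LocallyLipschitz (j x))
    (k₀ k₁ : ℝ) (hk₀ : 0 ≤ k₀) (hk₁ : 0 ≤ k₁)
    (hgrowth : ∀ᵐ x ∂μ, ∀ ξ : EuclideanSpace ℝ (Fin d),
      ∀ η ∈ clarkeSubdiffInner (j x) ξ, ‖η‖ ≤ k₀ + k₁ * ‖ξ‖)
    (hmeas' : ∀ u v : Lp (EuclideanSpace ℝ (Fin d)) 2 μ,
      Measurable (fun x => clarkeDeriv (j x) (u x) (v x)))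
    (v z : Lp (EuclideanSpace ℝ (Fin d)) 2 μ)
    (hz : ∀ w : Lp (EuclideanSpace ℝ (Fin d)) 2 μ,
      ⟪z, w⟫ ≤ clarkeDeriv
        (fun w' : Lp (EuclideanSpace ℝ (Fin d)) 2 μ => ∫ x, j x (w' x) ∂μ) v w) :
    ‖z‖ ≤ k₀ * Real.sqrt ((μ Set.univ).toReal) + k₁ * ‖v‖ :=
  clarkeSubdiff_integral_functional_bound_general (fun ξ => (hmeas ξ).aestronglyMeasurable) hint0
    hlip hk₀ hk₁ hgrowth hz
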